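/- For every n ≥ 5, the n×n strictly upper triangular matrix C over ℤ/2 with c_{1,2}=1, c_{1,n-2}=1, c_{n-2,n-1}=1, c_{n-2,n}=1 and all other entries 0 has all row sums 0 mod 2, but for j=1 and k=n−2 one has ∑_{r=1}^n c_{1,r}c_{n-2,r} + c_{1,n-2}·∑_{r<s} c_{n-2,r}c_{n-2,s} = 1 in ℤ/2. -/

import Mathlib

/-!
The `0`-`1` matrix whose `i`-th row is the indicator of a finite set `S i` has row sums `#(S i)`,
products of rows `#(S i ∩ S k)`, and second elementary symmetric function of the `k`-th row
`(#(S k)).choose 2`. Here every `S i` is empty or has two elements, so the row sums are even;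
the two nonempty sets `{1, n - 3}` and `{n - 2, n - 1}` are disjoint and the first contains the
index `n - 3` of the second, so the spin expression is `0 + 1 * Nat.choose 2 2 = 1`.
-/

open Finset

section IndicatorMatrix

variable {ι κ : Type*} (R : Type*) [NonAssocSemiring R]

/-- The `0`-`1` matrix whose `i`-th row is the indicator vector of `S i`. Prescribing the rows
as finsets turns sums of entries into cardinalities. -/
def indicatorMatrix [DecidableEq κ] (S : ι → Finset κ) : Matrix ι κ R :=
  Matrix.of fun i j => if j ∈ S i then 1 else 0

variable {R}

theorem indicatorMatrix_apply [DecidableEq κ] (S : ι → Finset κ) (i : ι) (j : κ) :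
    indicatorMatrix R S i j = if j ∈ S i then 1 else 0 :=
  rfl

theorem indicatorMatrix_mul_indicatorMatrix [DecidableEq κ] (S : ι → Finset κ) (i k : ι)
    (r s : κ) :
    indicatorMatrix R S i r * indicatorMatrix R S k s = if r ∈ S i ∧ s ∈ S k then 1 else 0 := by
  simp only [indicatorMatrix_apply, ite_and, ite_mul, one_mul, zero_mul]

theorem sum_indicatorMatrix [Fintype κ] [DecidableEq κ] (S : ι → Finset κ) (i : ι) :
    ∑ j, indicatorMatrix R S i j = #(S i) := by
  simp only [indicatorMatrix_apply, sum_boole, filter_univ_mem]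

theorem sum_indicatorMatrix_mul [Fintype κ] [DecidableEq κ] (S : ι → Finset κ) (i k : ι) :
    ∑ r, indicatorMatrix R S i r * indicatorMatrix R S k r = #(S i ∩ S k) := by
  simp only [indicatorMatrix_mul_indicatorMatrix, sum_boole, ← mem_inter, filter_univ_mem]

theorem sum_lt_indicatorMatrix_mul [Fintype κ] [LinearOrder κ] (S : ι → Finset κ) (k : ι) :
    ∑ r, ∑ s with r < s, indicatorMatrix R S k r * indicatorMatrix R S k s =
      (#(S k)).choose 2 := by
  have pairs_eq : ({x | x.1 < x.2 ∧ x.1 ∈ S k ∧ x.2 ∈ S k} : Finset (κ × κ)) =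
      {x ∈ S k ×ˢ S k | x.1 < x.2} := by
    grind
  simp only [indicatorMatrix_mul_indicatorMatrix, sum_filter, ← ite_and]
  rw [← Fintype.sum_prod_type', sum_boole, pairs_eq, card_product_filter_lt]

end IndicatorMatrix

/-- The sets of column indices of the nonzero entries in the rows of the non-spin example, with
indices counted from `0`. -/
def nonSpinSupport (n : ℕ) (i : Fin n) : Finset (Fin n) :=
  {j | (i.val = 0 ∧ j.val = 1) ∨ (i.val = 0 ∧ j.val = n - 3) ∨
    (i.val = n - 3 ∧ j.val = n - 2) ∨ (i.val = n - 3 ∧ j.val = n - 1)}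

namespace nonSpinSupport

variable {n : ℕ} {i k : Fin n}

theorem mem_iff {j : Fin n} :
    j ∈ nonSpinSupport n i ↔ (i.val = 0 ∧ j.val = 1) ∨ (i.val = 0 ∧ j.val = n - 3) ∨
      (i.val = n - 3 ∧ j.val = n - 2) ∨ (i.val = n - 3 ∧ j.val = n - 1) := by
  simp only [nonSpinSupport, mem_filter_univ]

theorem eq_pair_of_val_eq_zero (hn : 5 ≤ n) (hi : i.val = 0) :
    nonSpinSupport n i = {⟨1, by omega⟩, ⟨n - 3, by omega⟩} := by
  ext j
  simp only [mem_iff, mem_insert, mem_singleton, Fin.ext_iff]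
  omega

theorem eq_pair_of_val_eq_sub_three (hn : 5 ≤ n) (hk : k.val = n - 3) :
    nonSpinSupport n k = {⟨n - 2, by omega⟩, ⟨n - 1, by omega⟩} := by
  ext j
  simp only [mem_iff, mem_insert, mem_singleton, Fin.ext_iff]
  omega

theorem eq_empty (h_zero : i.val ≠ 0) (h_sub_three : i.val ≠ n - 3) :
    nonSpinSupport n i = ∅ := by
  ext j
  simp only [mem_iff, h_zero, h_sub_three, false_and, or_false, notMem_empty]

theorem card_of_val_eq_zero (hn : 5 ≤ n) (hi : i.val = 0) : #(nonSpinSupport n i) = 2 := by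
  rw [eq_pair_of_val_eq_zero hn hi, card_pair]
  simp only [ne_eq, Fin.ext_iff]
  omega

theorem card_of_val_eq_sub_three (hn : 5 ≤ n) (hk : k.val = n - 3) :
    #(nonSpinSupport n k) = 2 := by
  rw [eq_pair_of_val_eq_sub_three hn hk, card_pair]
  simp only [ne_eq, Fin.ext_iff]
  omega

theorem even_card (hn : 5 ≤ n) (i : Fin n) : Even #(nonSpinSupport n i) := by
  by_cases h_zero : i.val = 0
  · exact card_of_val_eq_zero hn h_zero ▸ even_two
  by_cases h_sub_three : i.val = n - 3
  · exact card_of_val_eq_sub_three hn h_sub_three ▸ even_two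
  · exact eq_empty h_zero h_sub_three ▸ Even.zero

theorem disjoint (hn : 5 ≤ n) (hi : i.val = 0) (hk : k.val = n - 3) :
    Disjoint (nonSpinSupport n i) (nonSpinSupport n k) := by
  refine disjoint_left.2 fun j mem_i mem_k => ?_
  rw [mem_iff] at mem_i mem_k
  omega

end nonSpinSupport

theorem stmt12_general {R : Type*} [NonAssocSemiring R] (n : ℕ) (hn : 5 ≤ n)
    (C : Matrix (Fin n) (Fin n) R)
    (hC : C = Matrix.of fun i j : Fin n =>
      if (i.val = 0 ∧ j.val = 1) ∨ (i.val = 0 ∧ j.val = n - 3) ∨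
         (i.val = n - 3 ∧ j.val = n - 2) ∨ (i.val = n - 3 ∧ j.val = n - 1)
      then (1 : R) else 0)
    {i k : Fin n} (hi : i.val = 0) (hk : k.val = n - 3) :
    (∀ l, Even (∑ j, C l j)) ∧
    (∑ r, C i r * C k r) + C i k * ∑ r, ∑ s with r < s, C k r * C k s = 1 := by
  obtain rfl : C = indicatorMatrix R (nonSpinSupport n) := by
    ext l j
    simp only [hC, Matrix.of_apply, indicatorMatrix_apply, nonSpinSupport.mem_iff]
  have entry_eq_one : indicatorMatrix R (nonSpinSupport n) i k = 1 :=
    if_pos (nonSpinSupport.mem_iff.2 (.inr (.inl ⟨hi, hk⟩)))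
  refine ⟨fun l => ?_, ?_⟩
  · rw [sum_indicatorMatrix]
    exact (nonSpinSupport.even_card hn l).natCast
  · rw [sum_indicatorMatrix_mul, disjoint_iff_inter_eq_empty.1 (nonSpinSupport.disjoint hn hi hk),
      card_empty, Nat.cast_zero, zero_add, entry_eq_one, one_mul, sum_lt_indicatorMatrix_mul,
      nonSpinSupport.card_of_val_eq_sub_three hn hk, Nat.choose_self, Nat.cast_one]

theorem stmt12 (n : ℕ) (hn : 5 ≤ n)
    (C : Matrix (Fin n) (Fin n) (ZMod 2))
    (hC : C = Matrix.of fun i j : Fin n =>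
      if (i.val = 0 ∧ j.val = 1) ∨ (i.val = 0 ∧ j.val = n - 3) ∨
         (i.val = n - 3 ∧ j.val = n - 2) ∨ (i.val = n - 3 ∧ j.val = n - 1)
      then (1 : ZMod 2) else 0) :
    (∀ i : Fin n, ∑ j : Fin n, C i j = 0) ∧
    (∑ r : Fin n, C ⟨0, by omega⟩ r * C ⟨n - 3, by omega⟩ r) +
      C ⟨0, by omega⟩ ⟨n - 3, by omega⟩ *
        ∑ r : Fin n, ∑ s ∈ univ.filter (fun s => r < s),
          C ⟨n - 3, by omega⟩ r * C ⟨n - 3, by omega⟩ s = 1 := by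
  obtain ⟨even_row, spin_eq_one⟩ :=
    stmt12_general n hn C hC (i := ⟨0, _⟩) (k := ⟨n - 3, _⟩) rfl rfl
  exact ⟨fun i => (even_row i).elim fun a h => h.trans (CharTwo.add_self_eq_zero a), spin_eq_one⟩
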